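/- Let p, q, r be positive integers with gcd(p,q) = gcd(q,r) = 1. Then the group G(p;q;r) is isomorphic to the cyclic group ℤ/prℤ. -/

import Mathlib

/-- The word `a_{p-1} a_{p-2} ⋯ a_0` in the free group on `Option ℤ`,
where `some k` stands for the generator `a k` and `none` stands for `ω`. -/
def omegaWord (p : ℕ) : FreeGroup (Option ℤ) :=
  ((List.range p).reverse.map (fun i => FreeGroup.of (some (i : ℤ)))).prod

/-- The relators of the group `G(p;q)`:
`ω = a_{p-1}⋯a_0`, `a_{k+q} = a_k` and `a_{k+p} = ω a_k ω⁻¹` for all `k ∈ ℤ`. -/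
def gRels (p q : ℕ) : Set (FreeGroup (Option ℤ)) :=
  {FreeGroup.of none * (omegaWord p)⁻¹} ∪
    (⋃ k : ℤ, {FreeGroup.of (some (k + (q : ℤ))) * (FreeGroup.of (some k))⁻¹}) ∪
    (⋃ k : ℤ, {FreeGroup.of (some (k + (p : ℤ))) *
      (FreeGroup.of none * FreeGroup.of (some k) * (FreeGroup.of none)⁻¹)⁻¹})

/-- The group `G(p;q)`. -/
abbrev Gpq (p q : ℕ) : Type := PresentedGroup (gRels p q)
/-- The relators of the group `G(p;q;r)`: those of `G(p;q)` together with `ω^r = e`. -/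
def gRelsProj (p q r : ℕ) : Set (FreeGroup (Option ℤ)) :=
  gRels p q ∪ {(FreeGroup.of none) ^ r}

/-- The group `G(p;q;r)`, the quotient of `G(p;q)` by the relation `ω^r = e`. -/
abbrev Gpqr (p q r : ℕ) : Type := PresentedGroup (gRelsProj p q r)

/-!
The sequence `a` has period `q`. Conjugation by `ω` shifts its index by `p`, so `ω ^ r = 1` makes
`r * p` another period. The two periods are coprime, so all `a k` coincide: the group is cyclic,
generated by `a 0`, with `ω = a 0 ^ p` and hence `a 0 ^ (p * r) = ω ^ r = 1`. The homomorphism to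
`ℤ/prℤ` sending every `a k` to `1` and `ω` to `p` shows that the order of `a 0` is a multiple of
`p * r`.
-/

theorem periodic_nsmul_of_smul_of_pow_eq_one {α G X : Type*} [AddMonoid α] [Monoid G]
    [MulAction G X] {f : α → X} {c : α} {g : G} {n : ℕ} (hf : ∀ x, f (x + c) = g • f x)
    (hg : g ^ n = 1) : Function.Periodic f (n • c) := by
  intro x
  have hsemiconj : Function.Semiconj f (· + c) (g • ·) := hf
  calc
    f (x + n • c) = f ((· + c)^[n] x) := by rw [add_right_iterate]
    _ = (g • ·)^[n] (f x) := hsemiconj.iterate_right n x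
    _ = g ^ n • f x := by rw [smul_iterate]
    _ = f x := by rw [hg, one_smul]

theorem eq_of_periodic_of_isCoprime {α : Type*} {f : ℤ → α} {m n : ℤ}
    (hm : Function.Periodic f m) (hn : Function.Periodic f n) (hmn : IsCoprime m n) (k l : ℤ) :
    f k = f l := by
  obtain ⟨u, v, huv⟩ := hmn
  have hone : Function.Periodic f 1 := huv ▸ (hm.int_mul u).add_period (hn.int_mul v)
  have heq_zero (j : ℤ) : f j = f 0 := by simpa using hone.int_mul_eq j
  exact (heq_zero k).trans (heq_zero l).symm

theorem map_omegaWord_of_forall_eq {M : Type*} [Monoid M] {f : FreeGroup (Option ℤ) →* M} {x : M}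
    (hf : ∀ i : ℕ, f (FreeGroup.of (some (i : ℤ))) = x) (p : ℕ) : f (omegaWord p) = x ^ p := by
  rw [omegaWord, map_list_prod, List.map_map, List.prod_eq_pow_card _ x]
  · simp
  · simpa using fun i _ ↦ hf i

theorem forall_mem_gRelsProj_map_eq_one_iff {H : Type*} [Group H] (p q r : ℕ)
    (f : FreeGroup (Option ℤ) →* H) :
    (∀ w ∈ gRelsProj p q r, f w = 1) ↔
      f (FreeGroup.of none) = f (omegaWord p) ∧
      (∀ k : ℤ, f (FreeGroup.of (some (k + q))) = f (FreeGroup.of (some k))) ∧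
      (∀ k : ℤ, f (FreeGroup.of (some (k + p))) =
        f (FreeGroup.of none) * f (FreeGroup.of (some k)) * (f (FreeGroup.of none))⁻¹) ∧
      f (FreeGroup.of none) ^ r = 1 := by
  simp only [gRelsProj, gRels, Set.mem_union, Set.mem_iUnion, Set.mem_singleton_iff, or_imp,
    forall_and, forall_exists_index, forall_eq, forall_eq_apply_imp_iff, map_mul, map_inv, map_pow,
    mul_inv_eq_one, and_assoc]

namespace Gpqr

variable {p q r : ℕ}

/-- The generator `a_k` of `G(p;q;r)`. -/
def a (p q r : ℕ) (k : ℤ) : Gpqr p q r := PresentedGroup.of (some k)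

/-- The generator `ω` of `G(p;q;r)`. -/
def omega (p q r : ℕ) : Gpqr p q r := PresentedGroup.of none

theorem relations (p q r : ℕ) :
    omega p q r = PresentedGroup.mk (gRelsProj p q r) (omegaWord p) ∧
    (∀ k, a p q r (k + q) = a p q r k) ∧
    (∀ k, a p q r (k + p) = omega p q r * a p q r k * (omega p q r)⁻¹) ∧
    omega p q r ^ r = 1 :=
  (forall_mem_gRelsProj_map_eq_one_iff p q r _).mp fun _ ↦ PresentedGroup.one_of_mem

theorem omega_eq_mk_omegaWord :
    omega p q r = PresentedGroup.mk (gRelsProj p q r) (omegaWord p) :=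
  (relations p q r).1

theorem periodic_a_natCast : Function.Periodic (a p q r) (q : ℤ) := (relations p q r).2.1

theorem a_add_natCast_eq_conj_smul (k : ℤ) :
    a p q r (k + p) = MulAut.conj (omega p q r) • a p q r k :=
  (relations p q r).2.2.1 k

theorem omega_pow : omega p q r ^ r = 1 := (relations p q r).2.2.2

theorem periodic_a_nsmul : Function.Periodic (a p q r) (r • (p : ℤ)) :=
  periodic_nsmul_of_smul_of_pow_eq_one a_add_natCast_eq_conj_smul <| by
    rw [← map_pow, omega_pow, map_one]

theorem a_eq_a (hpq : p.Coprime q) (hqr : q.Coprime r) (k l : ℤ) : a p q r k = a p q r l := by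
  refine eq_of_periodic_of_isCoprime periodic_a_natCast periodic_a_nsmul ?_ k l
  rw [nsmul_eq_mul]
  exact_mod_cast (hqr.mul_right hpq.symm).isCoprime

theorem omega_eq_a_pow (hpq : p.Coprime q) (hqr : q.Coprime r) (k : ℤ) :
    omega p q r = a p q r k ^ p :=
  omega_eq_mk_omegaWord.trans (map_omegaWord_of_forall_eq (fun i ↦ a_eq_a hpq hqr i k) p)

theorem a_pow_mul (hpq : p.Coprime q) (hqr : q.Coprime r) (k : ℤ) : a p q r k ^ (p * r) = 1 := by
  rw [pow_mul, ← omega_eq_a_pow hpq hqr, omega_pow]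

theorem zpowers_a (hpq : p.Coprime q) (hqr : q.Coprime r) (k : ℤ) :
    Subgroup.zpowers (a p q r k) = ⊤ := by
  rw [eq_top_iff, ← PresentedGroup.closure_range_of, Subgroup.closure_le]
  rintro _ ⟨_ | l, rfl⟩
  · exact ⟨p, (zpow_natCast _ p).trans (omega_eq_a_pow hpq hqr k).symm⟩
  · exact ⟨1, (zpow_one _).trans (a_eq_a hpq hqr k l)⟩

theorem exists_hom_a_eq_of_pow_eq_one {H : Type*} [Group H] {x : H} (hx : x ^ (p * r) = 1) :
    ∃ φ : Gpqr p q r →* H, ∀ k, φ (a p q r k) = x := by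
  let f : Option ℤ → H := fun i ↦ i.elim (x ^ p) fun _ ↦ x
  have hf : ∀ w ∈ gRelsProj p q r, FreeGroup.lift f w = 1 := by
    rw [forall_mem_gRelsProj_map_eq_one_iff,
      map_omegaWord_of_forall_eq (x := x) fun _ ↦ FreeGroup.lift_apply_of]
    have hconj : x = x ^ p * x * (x ^ p)⁻¹ :=
      eq_mul_inv_of_mul_eq (Commute.self_pow x p).eq
    simpa [f, ← pow_mul, hx] using hconj
  exact ⟨PresentedGroup.toGroup hf, fun _ ↦ PresentedGroup.toGroup.of hf⟩

theorem mul_dvd_orderOf_a (k : ℤ) : p * r ∣ orderOf (a p q r k) := by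
  let x : Multiplicative (ZMod (p * r)) := Multiplicative.ofAdd 1
  have hx : orderOf x = p * r := by rw [orderOf_ofAdd_eq_addOrderOf, ZMod.addOrderOf_one]
  obtain ⟨φ, hφ⟩ := exists_hom_a_eq_of_pow_eq_one (q := q) (orderOf_dvd_iff_pow_eq_one.mp hx.dvd)
  have hdvd : orderOf (φ (a p q r k)) ∣ orderOf (a p q r k) := orderOf_map_dvd φ _
  rwa [hφ, hx] at hdvd

theorem orderOf_a (hpq : p.Coprime q) (hqr : q.Coprime r) (k : ℤ) :
    orderOf (a p q r k) = p * r :=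
  Nat.dvd_antisymm (orderOf_dvd_of_pow_eq_one (a_pow_mul hpq hqr k)) (mul_dvd_orderOf_a k)

theorem isCyclic (hpq : p.Coprime q) (hqr : q.Coprime r) : IsCyclic (Gpqr p q r) :=
  isCyclic_iff_exists_zpowers_eq_top.mpr ⟨a p q r 0, zpowers_a hpq hqr 0⟩

theorem natCard (hpq : p.Coprime q) (hqr : q.Coprime r) : Nat.card (Gpqr p q r) = p * r := by
  rw [← orderOf_eq_card_of_zpowers_eq_top (zpowers_a hpq hqr 0), orderOf_a hpq hqr]

end Gpqr

/-- If `gcd(p,q) = gcd(q,r) = 1`, then `G(p;q;r)` is isomorphic to the cyclic group `ℤ/prℤ`. -/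
theorem stmt_12 (p q r : ℕ) (hp : 0 < p) (hq : 0 < q) (hr : 0 < r)
    (hpq : Nat.gcd p q = 1) (hqr : Nat.gcd q r = 1) :
    Nonempty (Gpqr p q r ≃* Multiplicative (ZMod (p * r))) := by
  have := Gpqr.isCyclic hpq hqr
  have hcard : Nat.card (Gpqr p q r) = Nat.card (Multiplicative (ZMod (p * r))) := by
    rw [Gpqr.natCard hpq hqr, Nat.card_congr Multiplicative.toAdd, Nat.card_zmod]
  exact ⟨mulEquivOfCyclicCardEq hcard⟩
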